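/- arXiv:1102.5427 — 3 statements merged into one kernel-verified Lean document; each statement's English description precedes it below -/
import Mathlib

section
/- Given η, φ ∈ C(X) and Z ⊆ X, suppose there exist α, β ∈ ℝ such that α ≤ liminf_{n→∞} (1/n)S_nφ(x) ≤ limsup_{n→∞} (1/n)S_nφ(x) ≤ β for every x ∈ Z. Then P_Z(η) + αt ≤ P_Z(η + tφ) ≤ P_Z(η) + βt for all t > 0. -/
/-! Both inequalities are instances of one comparison principle (`pressure_le_of_birk_le`): if
`S_n η₂(x) ≤ S_n η₁(x) + n (c + ε)` for all large `n`, for each `x ∈ Z` and `ε > 0`, then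
`P_Z(η₂) ≤ P_Z(η₁) + c`.

For the comparison principle, write `Z = ⋃ₘ Zₘ`, where on `Zₘ` the inequality holds for every
`n ≥ m`. An efficient cover of `Z` for `η₁` by balls `B(x,n,δ')` with `n ≥ m` yields a cover of
`Zₘ` for `η₂`: discard the balls that miss `Zₘ`, and replace each remaining one by
`B(y,n,2δ')` with `y` in the intersection. Uniform continuity of `η₁` makes `S_n η₁(x)` and
`S_n η₁(y)` differ by at most `n ε`, so each weight grows by at most the factor
`exp (n (c + 2ε))`, which is absorbed by increasing `s` by `c + 2ε`. Taking the union over `m` of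
covers whose sums are summably small gives a cover of `Z` with small sum. Re-centring is what makes
the passage to `Zₘ` legitimate, since centres are required to lie in the set being covered; the
resulting loss from `δ'` to `2δ'` disappears in the supremum over `δ`. -/

open MeasureTheory Filter Set Topology
open scoped ENNReal

noncomputable section

namespace Multifractal

variable {X : Type*} [MetricSpace X]

/-- The Birkhoff sum `S_n φ(x) = ∑_{k<n} φ(f^k x)`. -/
def birk (f : X → X) (φ : X → ℝ) (n : ℕ) (x : X) : ℝ :=
  ∑ k ∈ Finset.range n, φ (f^[k] x)

/-- The Bowen ball `B(x,n,δ)`. -/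
def bowenBall (f : X → X) (x : X) (n : ℕ) (δ : ℝ) : Set X :=
  {y | ∀ k < n, dist (f^[k] x) (f^[k] y) < δ}

/-- A countable cover of `Z` by Bowen balls of order at least `N` and radius `δ`,
with centres in `Z`; this is the collection `P(Z,N,δ)`. -/
def IsBowenCover (f : X → X) (Z : Set X) (N : ℕ) (δ : ℝ) (E : Set (X × ℕ)) : Prop :=
  E.Countable ∧ (∀ p ∈ E, p.1 ∈ Z ∧ N ≤ p.2) ∧ Z ⊆ ⋃ p ∈ E, bowenBall f p.1 p.2 δ

/-- The weighted sum `∑_i exp (w (x_i, n_i))` over a cover `E`. -/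
def coverSum (E : Set (X × ℕ)) (w : X × ℕ → ℝ) : ℝ≥0∞ :=
  ∑' p : E, ENNReal.ofReal (Real.exp (w ↑p))

/-- The set function `m_P(Z,s,φ,δ) = lim_{N→∞} m_P(Z,s,φ,N,δ)` (the limit in `N` is a
supremum, by monotonicity). -/
def mP (f : X → X) (Z : Set X) (s : ℝ) (φ : X → ℝ) (δ : ℝ) : ℝ≥0∞ :=
  ⨆ N : ℕ, ⨅ (E : Set (X × ℕ)) (_ : IsBowenCover f Z N δ E),
    coverSum E fun p => -(p.2 : ℝ) * s + birk f φ p.2 p.1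

/-- `P_Z(φ,δ) = inf {s | m_P(Z,s,φ,δ) = 0}`, as an extended real. -/
def pressureAt (f : X → X) (Z : Set X) (φ : X → ℝ) (δ : ℝ) : EReal :=
  sInf ((fun s : ℝ => (s : EReal)) '' {s : ℝ | mP f Z s φ δ = 0})

/-- The topological pressure `P_Z(φ) = lim_{δ→0} P_Z(φ,δ)` (the limit is a supremum, by
monotonicity in `δ`). -/
def pressure (f : X → X) (Z : Set X) (φ : X → ℝ) : EReal :=
  ⨆ (δ : ℝ) (_ : 0 < δ), pressureAt f Z φ δ

/-- Finite topological entropy: `h_top(X) = P_X(0) < ∞`. -/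
def FiniteHtop (f : X → X) : Prop := pressure f univ (fun _ => 0) ≠ ⊤

/-- The set function `m_u(Z,s,δ)` used to define the `u`-dimension. -/
def mU (f : X → X) (u : X → ℝ) (Z : Set X) (s : ℝ) (δ : ℝ) : ℝ≥0∞ :=
  ⨆ N : ℕ, ⨅ (E : Set (X × ℕ)) (_ : IsBowenCover f Z N δ E),
    coverSum E fun p => -s * birk f u p.2 p.1

/-- `dim_u(Z,δ) = inf {s | m_u(Z,s,δ) = 0}`. -/
def dimuAt (f : X → X) (u : X → ℝ) (Z : Set X) (δ : ℝ) : EReal :=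
  sInf ((fun s : ℝ => (s : EReal)) '' {s : ℝ | mU f u Z s δ = 0})

/-- The `u`-dimension `dim_u Z = lim_{δ→0} dim_u(Z,δ)`, with `dim_u ∅ = -∞`. -/
def dimu (f : X → X) (u : X → ℝ) (Z : Set X) : EReal :=
  ⨆ (δ : ℝ) (_ : 0 < δ), dimuAt f u Z δ

/-- Property (P): for every `δ>0` there exist covers `E_N ∈ P(X,N,δ)` with
`lim_{N→∞} inf_{(x,n) ∈ E_N} S_n u(x) = +∞`. -/
def PropP (f : X → X) (u : X → ℝ) : Prop :=
  ∀ δ : ℝ, 0 < δ → ∃ E : ℕ → Set (X × ℕ),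
    (∀ N, IsBowenCover f univ N δ (E N)) ∧
    ∀ C : ℝ, ∃ N₀ : ℕ, ∀ N ≥ N₀, ∀ p ∈ E N, C ≤ birk f u p.2 p.1

/-- The ratio level set `K_α = {x | S_nφ(x)/S_nψ(x) → α}`. -/
def Kratio (f : X → X) (φ ψ : X → ℝ) (α : ℝ) : Set X :=
  {x | Tendsto (fun n : ℕ => birk f φ n x / birk f ψ n x) atTop (𝓝 α)}

/-- The Birkhoff average level set `K_α^φ = {x | (1/n) S_nφ(x) → α}`. -/
def Kbirk (f : X → X) (φ : X → ℝ) (α : ℝ) : Set X :=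
  {x | Tendsto (fun n : ℕ => birk f φ n x / n) atTop (𝓝 α)}

/-- The set `X̂` of points with `liminf S_nψ(x) > 0` and `liminf (1/n) S_n u(x) > 0`. -/
def Xhat (f : X → X) (ψ u : X → ℝ) : Set X :=
  {x | 0 < Filter.liminf (fun n : ℕ => ((birk f ψ n x : ℝ) : EReal)) atTop ∧
       0 < Filter.liminf (fun n : ℕ => ((birk f u n x / n : ℝ) : EReal)) atTop}

/-- The set of points where `liminf (1/n) S_n v(x) > 0`. -/
def liminfPosSet (f : X → X) (v : X → ℝ) : Set X :=
  {x | 0 < Filter.liminf (fun n : ℕ => ((birk f v n x / n : ℝ) : EReal)) atTop}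

/-- The potential `q(φ - αψ) - tu`. -/
def potential (φ ψ u : X → ℝ) (α q t : ℝ) : X → ℝ :=
  fun x => q * (φ x - α * ψ x) - t * u x

/-- `T_α(q) = inf {t | P_Z(q(φ-αψ) - tu) ≤ 0}` for the system restricted to `Z`. -/
def TspecOn (f : X → X) (Z : Set X) (φ ψ u : X → ℝ) (α q : ℝ) : EReal :=
  sInf ((fun t : ℝ => (t : EReal)) '' {t : ℝ | pressure f Z (potential φ ψ u α q t) ≤ 0})

/-- The predicted spectrum `S(α) = inf_q T_α(q)` for the system restricted to `Z`. -/
def SspecOn (f : X → X) (Z : Set X) (φ ψ u : X → ℝ) (α : ℝ) : EReal :=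
  ⨅ q : ℝ, TspecOn f Z φ ψ u α q

/-- `T_α(q) = inf {t | P(q(φ-αψ) - tu) ≤ 0}`. -/
def Tspec (f : X → X) (φ ψ u : X → ℝ) (α q : ℝ) : EReal := TspecOn f univ φ ψ u α q

/-- The thermodynamically predicted spectrum `S(α) = inf_q T_α(q)`. -/
def Sspec (f : X → X) (φ ψ u : X → ℝ) (α : ℝ) : EReal := SspecOn f univ φ ψ u α

/-- `T_0(q) = inf{t | P(qφ - tu) ≤ 0}` (the non-mixed case `u = ψ`). -/
def T0fun (f : X → X) (φ u : X → ℝ) (q : ℝ) : EReal :=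
  sInf ((fun t : ℝ => (t : EReal)) ''
    {t : ℝ | pressure f univ (fun x => q * φ x - t * u x) ≤ 0})

/-- `Q = {q | T_0(q) < ∞}`. -/
def Qset (f : X → X) (φ u : X → ℝ) : Set ℝ := {q | T0fun f φ u q < ⊤}

/-- `Ĩ = ⋃_{q ∈ int Q} J(q)`: `α ∈ Ĩ` iff `α` is the slope of a subtangent line to the
convex function `T_0` at some `q` in the interior of `Q`. -/
def Itilde (f : X → X) (φ u : X → ℝ) : Set ℝ :=
  {α | ∃ q ∈ interior (Qset f φ u), ∀ q' : ℝ,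
    T0fun f φ u q + ((α * (q' - q) : ℝ) : EReal) ≤ T0fun f φ u q'}

/-- The approximate level set `G_n(U)`. -/
def Gset (f : X → X) (φ : X → ℝ) (n : ℕ) (U : Set ℝ) : Set X :=
  {x | birk f φ n x / n ∈ U}

/-- `Λ_n^δ(U)`: the minimal cardinality of a set `E` with `B(E,n,δ) ⊇ G_n(U)`. -/
def Lam (f : X → X) (φ : X → ℝ) (n : ℕ) (δ : ℝ) (U : Set ℝ) : ℕ :=
  sInf {m : ℕ | ∃ E : Finset X, E.card = m ∧ Gset f φ n U ⊆ ⋃ x ∈ E, bowenBall f x n δ}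

/-- `(1/n) log m` as an extended real, with value `-∞` when `m = 0`. -/
def elogn (m n : ℕ) : EReal :=
  if m = 0 then (⊥ : EReal) else ((Real.log m / n : ℝ) : EReal)

/-- The lower coarse spectrum. -/
def lFspec (f : X → X) (φ : X → ℝ) (α : ℝ) : EReal :=
  ⨅ (U : Set ℝ) (_ : U ∈ 𝓝 α), ⨆ (δ : ℝ) (_ : 0 < δ),
    Filter.liminf (fun n : ℕ => elogn (Lam f φ n δ U) n) atTop

/-- The upper coarse spectrum. -/
def uFspec (f : X → X) (φ : X → ℝ) (α : ℝ) : EReal :=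
  ⨅ (U : Set ℝ) (_ : U ∈ 𝓝 α), ⨆ (δ : ℝ) (_ : 0 < δ),
    Filter.limsup (fun n : ℕ => elogn (Lam f φ n δ U) n) atTop

/-- Right derivative of a convex function, as the infimum of difference quotients. -/
def Dplus (g : ℝ → ℝ) (q : ℝ) : ℝ :=
  sInf {m : ℝ | ∃ ε : ℝ, 0 < ε ∧ m = (g (q + ε) - g q) / ε}

/-- Left derivative of a convex function, as the supremum of difference quotients. -/
def Dminus (g : ℝ → ℝ) (q : ℝ) : ℝ :=
  sSup {m : ℝ | ∃ ε : ℝ, 0 < ε ∧ m = (g q - g (q - ε)) / ε}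

section Measures

variable [MeasurableSpace X]

/-- The set `M_f(X)` of `f`-invariant Borel probability measures. -/
def invProb (f : X → X) : Set (Measure X) :=
  {μ | IsProbabilityMeasure μ ∧ MeasurePreserving f μ μ}

/-- The set `M_f^e(X)` of ergodic `f`-invariant Borel probability measures. -/
def ergProb (f : X → X) : Set (Measure X) :=
  {μ | IsProbabilityMeasure μ ∧ Ergodic f μ}

/-- A finite measurable partition of `X`. -/
def IsFinPartition {m : ℕ} (P : Fin m → Set X) : Prop :=
  (∀ i, MeasurableSet (P i)) ∧ (∀ i j, i ≠ j → Disjoint (P i) (P j)) ∧ (⋃ i, P i) = univ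

/-- The entropy `H_μ(P) = ∑_i -μ(P_i) log μ(P_i)` of a finite partition. -/
def partEnt (μ : Measure X) {ι : Type*} [Fintype ι] (P : ι → Set X) : ℝ :=
  ∑ i, -((μ (P i)).toReal * Real.log (μ (P i)).toReal)

/-- The dynamical refinement `⋁_{k<n} f^{-k} P` of a partition. -/
def orbitJoin (f : X → X) {m : ℕ} (P : Fin m → Set X) (n : ℕ) :
    (Fin n → Fin m) → Set X :=
  fun w => ⋂ k : Fin n, f^[(k : ℕ)] ⁻¹' P (w k)

/-- The Kolmogorov–Sinai entropy `h_μ(f)`. -/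
def kolSinai (f : X → X) (μ : Measure X) : ℝ :=
  ⨆ (m : ℕ) (P : Fin m → Set X) (_ : IsFinPartition P),
    ⨅ n : ℕ, partEnt μ (orbitJoin f P (n + 1)) / (n + 1)

/-- The `u`-dimension of a measure: `dim_u μ = inf {dim_u Z | μ(Z) = 1}`. -/
def dimuMeas (f : X → X) (u : X → ℝ) (μ : Measure X) : EReal :=
  sInf {d : EReal | ∃ Z : Set X, μ Z = 1 ∧ d = dimu f u Z}

/-- `μ` is a weak Gibbs measure for `φ` with pressure `Pφ`. -/
def WeakGibbs (f : X → X) (μ : Measure X) (φ : X → ℝ) (Pφ : ℝ) : Prop :=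
  ∀ x : X,
    Tendsto (fun δ : ℝ => Filter.liminf (fun n : ℕ =>
        (((-Real.log ((μ (bowenBall f x n δ)).toReal) + birk f φ n x) / n : ℝ) : EReal)) atTop)
      (𝓝[>] (0 : ℝ)) (𝓝 ((Pφ : EReal))) ∧
    Tendsto (fun δ : ℝ => Filter.limsup (fun n : ℕ =>
        (((-Real.log ((μ (bowenBall f x n δ)).toReal) + birk f φ n x) / n : ℝ) : EReal)) atTop)
      (𝓝[>] (0 : ℝ)) (𝓝 ((Pφ : EReal)))

/-- The level set `K_α^{d_μ}` of points with pointwise dimension `α`. -/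
def KdimSet (μ : Measure X) (α : ℝ) : Set X :=
  {x | Tendsto (fun r : ℝ => Real.log ((μ (Metric.ball x r)).toReal) / Real.log r)
      (𝓝[>] (0 : ℝ)) (𝓝 α)}

end Measures


theorem birk_le_of_mem_bowenBall {f : X → X} {η : X → ℝ} {δ ε : ℝ}
    (hu : ∀ a b, dist a b < δ → η b ≤ η a + ε) {x y : X} {n : ℕ}
    (hy : y ∈ bowenBall f x n δ) : birk f η n y ≤ birk f η n x + n * ε := by
  unfold birk
  calc ∑ k ∈ Finset.range n, η (f^[k] y)
      ≤ ∑ k ∈ Finset.range n, (η (f^[k] x) + ε) :=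
        Finset.sum_le_sum fun k hk => hu _ _ (hy k (Finset.mem_range.1 hk))
    _ = _ := by simp [Finset.sum_add_distrib]

theorem mem_bowenBall_of_common {f : X → X} {x y z : X} {n : ℕ} {δ δ' : ℝ} (hδ : 2 * δ' ≤ δ)
    (hy : y ∈ bowenBall f x n δ') (hz : z ∈ bowenBall f x n δ') : z ∈ bowenBall f y n δ := by
  intro k hk
  have h1 := hy k hk
  have h2 := hz k hk
  have h3 := dist_triangle_left (f^[k] y) (f^[k] z) (f^[k] x)
  linarith

/-- The covering argument: a null value for `η₁` at scale `δ'` gives a null value for `η₂` at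
scale `2δ' ≤ δ`, with `s` raised by the two error terms. -/
theorem mP_eq_zero_of_birk_le {f : X → X} {Z : Set X} {η₁ η₂ : X → ℝ} {c ε δ δ' s : ℝ}
    (hu : ∀ a b, dist a b < δ' → η₁ b ≤ η₁ a + ε) (hδ : 2 * δ' ≤ δ)
    (hb : ∀ x ∈ Z, ∃ m : ℕ, ∀ n ≥ m, birk f η₂ n x ≤ birk f η₁ n x + n * (c + ε))
    (h0 : mP f Z s η₁ δ' = 0) : mP f Z (s + c + 2 * ε) η₂ δ = 0 := by
  unfold mP at h0 ⊢
  rw [ENNReal.iSup_eq_zero] at h0 ⊢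
  intro N
  refine le_antisymm (ENNReal.le_of_forall_pos_le_add fun e he _ => ?_) zero_le
  obtain ⟨e', he', hsum⟩ := ENNReal.exists_pos_sum_of_countable
    (ENNReal.coe_pos.2 he).ne' ℕ
  have hE : ∀ m : ℕ, ∃ E : Set (X × ℕ), IsBowenCover f Z (max N m) δ' E ∧
      coverSum E (fun p => -(p.2 : ℝ) * s + birk f η₁ p.2 p.1) < e' m := by
    intro m
    have h : (⨅ (E : Set (X × ℕ)) (_ : IsBowenCover f Z (max N m) δ' E),
        coverSum E fun p => -(p.2 : ℝ) * s + birk f η₁ p.2 p.1) < e' m := by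
      rw [h0]; exact_mod_cast he' m
    simpa only [iInf_lt_iff, exists_prop] using h
  choose E hEc hEs using hE
  let Zm : ℕ → Set X := fun m =>
    {x | x ∈ Z ∧ ∀ n ≥ m, birk f η₂ n x ≤ birk f η₁ n x + n * (c + ε)}
  let S : ℕ → Set (X × ℕ) := fun m =>
    {p | p ∈ E m ∧ ∃ y, y ∈ bowenBall f p.1 p.2 δ' ∧ y ∈ Zm m}
  have hS : ∀ q : Σ m, S m, ∃ y, y ∈ bowenBall f q.2.1.1 q.2.1.2 δ' ∧ y ∈ Zm q.1 :=
    fun q => q.2.2.2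
  -- The retained balls, over all `m` at once, with new centres `y q ∈ Zm m`.
  choose y hyB hyZ using hS
  let g : (Σ m, S m) → X × ℕ := fun q => (y q, q.2.1.2)
  have hcS : ∀ m, Countable (S m) := fun m => ((hEc m).1.mono fun p hp => hp.1).to_subtype
  have hcover : IsBowenCover f Z N δ (range g) := by
    refine ⟨countable_range g, ?_, ?_⟩
    · rintro _ ⟨q, rfl⟩
      exact ⟨(hyZ q).1, (le_max_left _ _).trans ((hEc q.1).2.1 _ q.2.2.1).2⟩
    · intro x hx
      obtain ⟨m, hm⟩ := hb x hx
      obtain ⟨p, hp, hxp⟩ := mem_iUnion₂.1 ((hEc m).2.2 hx)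
      exact mem_iUnion₂.2 ⟨g ⟨m, p, hp, x, hxp, hx, hm⟩, mem_range_self _,
        mem_bowenBall_of_common hδ (hyB ⟨m, p, hp, x, hxp, hx, hm⟩) hxp⟩
  refine (iInf₂_le _ hcover).trans ?_
  rw [zero_add]
  refine le_trans ?_ hsum.le
  unfold coverSum
  -- `g` need not be injective: re-centring can identify balls, which only decreases the sum.
  refine (ENNReal.tsum_le_tsum_comp_of_surjective
    (f := rangeFactorization g) rangeFactorization_surjective _).trans ?_
  rw [ENNReal.tsum_sigma']
  refine ENNReal.tsum_le_tsum fun m => le_trans ?_ (hEs m).le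
  unfold coverSum
  refine le_trans (ENNReal.tsum_le_tsum fun p => ?_)
    (ENNReal.tsum_mono_subtype (s := S m) (t := E m)
      (fun p => ENNReal.ofReal (Real.exp (-(p.2 : ℝ) * s + birk f η₁ p.2 p.1)))
      fun p hp => hp.1)
  apply ENNReal.ofReal_le_ofReal
  apply Real.exp_le_exp.2
  have h1 := (hyZ ⟨m, p⟩).2 p.1.2 ((le_max_right _ _).trans ((hEc m).2.1 _ p.2.1).2)
  have h2 := birk_le_of_mem_bowenBall hu (hyB ⟨m, p⟩)
  change -(p.1.2 : ℝ) * (s + c + 2 * ε) + birk f η₂ p.1.2 (y ⟨m, p⟩) ≤ _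
  dsimp only at h1 h2
  linarith

/-- The comparison principle: an asymptotic bound `c` on the excess of the `η₂`-averages over the
`η₁`-averages along orbits from `Z` bounds the excess of the pressure on `Z`. -/
theorem pressure_le_of_birk_le [CompactSpace X] {f : X → X} {Z : Set X} {η₁ η₂ : X → ℝ} {c : ℝ}
    (hη : Continuous η₁)
    (hb : ∀ ε > 0, ∀ x ∈ Z, ∀ᶠ n : ℕ in atTop,
      birk f η₂ n x ≤ birk f η₁ n x + n * (c + ε)) :
    pressure f Z η₂ ≤ pressure f Z η₁ + (c : EReal) := by
  refine iSup₂_le fun δ hδ => EReal.le_of_forall_lt_iff_le.1 fun z hz => ?_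
  have hz' : pressure f Z η₁ < ((z - c : ℝ) : EReal) := by
    rw [EReal.coe_sub]
    exact (EReal.lt_sub_iff_add_lt (by simp) (by simp)).2 hz
  obtain ⟨r, hr1, hr2⟩ := EReal.lt_iff_exists_real_btwn.1 hz'
  have hr2 : r < z - c := by exact_mod_cast hr2
  obtain ⟨ε, hε, hεz⟩ : ∃ ε > 0, r + c + 2 * ε = z :=
    ⟨(z - c - r) / 2, by linarith, by ring⟩
  obtain ⟨δ₀, hδ₀, huc⟩ := Metric.uniformContinuous_iff.1
    (CompactSpace.uniformContinuous_of_continuous hη) ε hε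
  have hδ' : 0 < min δ₀ (δ / 2) := lt_min hδ₀ (by linarith)
  have hlt : pressureAt f Z η₁ (min δ₀ (δ / 2)) < r :=
    (le_iSup₂ (f := fun (δ : ℝ) (_ : 0 < δ) => pressureAt f Z η₁ δ) _ hδ').trans_lt hr1
  obtain ⟨_, ⟨s, hs, rfl⟩, hsr⟩ := sInf_lt_iff.1 hlt
  have hsr : s < r := EReal.coe_lt_coe_iff.1 hsr
  have hmem : mP f Z (s + c + 2 * ε) η₂ δ = 0 := by
    refine mP_eq_zero_of_birk_le (fun a b hab => ?_) ?_
      (fun x hx => eventually_atTop.1 (hb ε hε x hx)) hs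
    · have := huc (hab.trans_le (min_le_left _ _))
      rw [Real.dist_eq] at this
      linarith [(abs_lt.1 this).1]
    · linarith [min_le_right δ₀ (δ / 2)]
  have hle : ((s + c + 2 * ε : ℝ) : EReal) ≤ (z : EReal) :=
    EReal.coe_le_coe_iff.2 (by linarith)
  exact le_trans (sInf_le ⟨s + c + 2 * ε, hmem, rfl⟩) hle

theorem birk_add_mul (f : X → X) (η φ : X → ℝ) (t : ℝ) (n : ℕ) (x : X) :
    birk f (fun x => η x + t * φ x) n x = birk f η n x + t * birk f φ n x := by
  simp [birk, Finset.sum_add_distrib, Finset.mul_sum]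

/-- Lemma: pressure bounds from Birkhoff average bounds.
If `α ≤ liminf (1/n)S_nφ(x) ≤ limsup (1/n)S_nφ(x) ≤ β` for every `x ∈ Z`, then
`P_Z(η) + αt ≤ P_Z(η + tφ) ≤ P_Z(η) + βt` for all `t > 0`. -/
theorem pressure_bounds {X : Type*} [MetricSpace X] [CompactSpace X]
    (f : X → X) (hf : Continuous f) (hfin : FiniteHtop f)
    (η φ : X → ℝ) (hη : Continuous η) (hφ : Continuous φ)
    (Z : Set X) (α β : ℝ)
    (hbd : ∀ x ∈ Z,
      (α : EReal) ≤ Filter.liminf (fun n : ℕ => ((birk f φ n x / n : ℝ) : EReal)) atTop ∧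
      Filter.limsup (fun n : ℕ => ((birk f φ n x / n : ℝ) : EReal)) atTop ≤ (β : EReal)) :
    ∀ t : ℝ, 0 < t →
      pressure f Z η + ((α * t : ℝ) : EReal) ≤ pressure f Z (fun x => η x + t * φ x) ∧
      pressure f Z (fun x => η x + t * φ x) ≤ pressure f Z η + ((β * t : ℝ) : EReal) := by
  intro t ht
  constructor
  · have key : pressure f Z η ≤
        pressure f Z (fun x => η x + t * φ x) + ((-(α * t) : ℝ) : EReal) := by
      refine pressure_le_of_birk_le (by fun_prop) fun ε hε x hx => ?_
      have hlt : ((α - ε / t : ℝ) : EReal) < (α : EReal) := by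
        exact_mod_cast sub_lt_self α (div_pos hε ht)
      filter_upwards [eventually_lt_of_lt_liminf (hlt.trans_le (hbd x hx).1),
        eventually_gt_atTop 0] with n hn hn0
      have hn : α - ε / t < birk f φ n x / n := by exact_mod_cast hn
      have hn0 : (0 : ℝ) < n := by exact_mod_cast hn0
      rw [lt_div_iff₀ hn0] at hn
      have h := mul_le_mul_of_nonneg_left hn.le ht.le
      have e : t * ((α - ε / t) * n) = n * (α * t - ε) := by field_simp
      rw [birk_add_mul]
      linarith
    rw [EReal.coe_neg, ← sub_eq_add_neg] at key
    exact (EReal.le_sub_iff_add_le (.inl (EReal.coe_ne_bot _)) (.inl (EReal.coe_ne_top _))).1 key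
  · refine pressure_le_of_birk_le hη fun ε hε x hx => ?_
    have hlt : (β : EReal) < ((β + ε / t : ℝ) : EReal) := by
      exact_mod_cast lt_add_of_pos_right β (div_pos hε ht)
    filter_upwards [eventually_lt_of_limsup_lt ((hbd x hx).2.trans_lt hlt),
      eventually_gt_atTop 0] with n hn hn0
    have hn : birk f φ n x / n < β + ε / t := by exact_mod_cast hn
    have hn0 : (0 : ℝ) < n := by exact_mod_cast hn0
    rw [div_lt_iff₀ hn0] at hn
    have h := mul_le_mul_of_nonneg_left hn.le ht.le
    have e : t * ((β + ε / t) * n) = n * (β * t + ε) := by field_simp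
    rw [birk_add_mul]
    linarith
end Multifractal
end
end

section
/- Let f be a continuous conformal map of a compact metric space X with continuous conformal derivative f', and suppose there is a fixed point p = f(p) with f'(p) = 1 and f'(x) > 1 for all x ≠ p; set u = log f'. Then for every φ ∈ C(X) and every α ≠ φ(p), every point x with lim_{n→∞} (1/n)S_nφ(x) = α satisfies liminf_{n→∞} (1/n)S_n u(x) > 0; that is, the Birkhoff level set K_α = {x : lim_n (1/n)S_nφ(x) = α} is contained in X̂ = {x : liminf_n (1/n)S_n u(x) > 0}. -/
/-!
The function `u = log f'` is continuous and nonnegative, and vanishes only at `p`. By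
compactness, for every `ε > 0` there is `C > 0` with `|φ - φ p| ≤ ε + C u` on all of `X`
(`exists_abs_sub_le`). Averaging along the orbit of `x` gives
`|S_n φ(x) / n - φ p| ≤ ε + C S_n u(x) / n`. If the left side tends to `|α - φ p| > 2 ε`,
then `S_n u(x) / n ≥ ε / C` eventually, so the lower limit is positive.
-/

open MeasureTheory Filter Set Topology
open scoped ENNReal

noncomputable section

namespace Multifractal

variable {X : Type*} [MetricSpace X]

/-- On the compact set where `φ` is at least `ε` away from `φ p`, the continuous function
`log fd` has no zero, so `|φ - φ p| / log fd` is bounded there by some `C`; elsewhere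
`|φ - φ p| < ε`. -/
lemma exists_abs_sub_le {X : Type*} [MetricSpace X] [CompactSpace X]
    {fd : X → ℝ} (hfd : Continuous fd) {p : X} (hone : fd p = 1)
    (hexp : ∀ x, x ≠ p → 1 < fd x) {φ : X → ℝ} (hφ : Continuous φ) {ε : ℝ} (hε : 0 < ε) :
    ∃ C : ℝ, 0 < C ∧ ∀ x, |φ x - φ p| ≤ ε + C * Real.log (fd x) := by
  have hdist : Continuous fun x => |φ x - φ p| := (hφ.sub continuous_const).abs
  have hK : IsCompact {x | ε ≤ |φ x - φ p|} :=
    (isClosed_le continuous_const hdist).isCompact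
  have hlog : ∀ x ∈ {x | ε ≤ |φ x - φ p|}, 0 < Real.log (fd x) := by
    intro x hx
    refine Real.log_pos (hexp x ?_)
    rintro rfl
    simp only [mem_ofPred_eq, sub_self, abs_zero] at hx
    linarith
  have hcont : ContinuousOn (fun x => |φ x - φ p| / Real.log (fd x))
      {x | ε ≤ |φ x - φ p|} := by
    refine hdist.continuousOn.div (hfd.continuousOn.log fun x hx h0 => ?_)
      fun x hx => (hlog x hx).ne'
    have := hlog x hx
    simp [h0] at this
  obtain ⟨C, hC⟩ := hK.bddAbove_image hcont
  refine ⟨max C 1, lt_max_of_lt_right one_pos, fun x => ?_⟩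
  by_cases hx : ε ≤ |φ x - φ p|
  · have h1 : |φ x - φ p| / Real.log (fd x) ≤ max C 1 :=
      (hC (mem_image_of_mem _ hx)).trans (le_max_left _ _)
    rw [div_le_iff₀ (hlog x hx)] at h1
    linarith
  · have h0 : 0 ≤ Real.log (fd x) := by
      by_cases hxp : x = p
      · simp [hxp, hone]
      · exact (Real.log_pos (hexp x hxp)).le
    have : 0 ≤ max C 1 * Real.log (fd x) :=
      mul_nonneg (zero_le_one.trans (le_max_right _ _)) h0
    linarith

/-- Lemma: Birkhoff level sets away from `φ(p)` have positive lower
Lyapunov exponent.  If `f` is conformal with `f'(p) = 1` at a fixed point `p` and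
`f'(x) > 1` elsewhere, then for `α ≠ φ(p)` the level set `K_α` is contained in
`X̂ = {x | liminf (1/n)S_n log f'(x) > 0}`. -/
theorem parabolic_level_sets {X : Type*} [MetricSpace X] [CompactSpace X]
    (f : X → X) (hf : Continuous f)
    (fd : X → ℝ) (hfd : Continuous fd) (hpos : ∀ x, 0 < fd x)
    (hconf : ∀ x : X,
      Tendsto (fun y => dist (f x) (f y) / dist x y) (𝓝[≠] x) (𝓝 (fd x)))
    (p : X) (hfix : f p = p) (hone : fd p = 1) (hexp : ∀ x, x ≠ p → 1 < fd x)
    (φ : X → ℝ) (hφ : Continuous φ) (α : ℝ) (hα : α ≠ φ p) :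
    Kbirk f φ α ⊆ liminfPosSet f (fun x => Real.log (fd x)) := by
  obtain ⟨ε, hε, hεα⟩ : ∃ ε : ℝ, 0 < ε ∧ 2 * ε < |α - φ p| :=
    ⟨|α - φ p| / 4, by have := abs_pos.mpr (sub_ne_zero.mpr hα); positivity,
      by have := abs_pos.mpr (sub_ne_zero.mpr hα); linarith⟩
  obtain ⟨C, hC, hbd⟩ := exists_abs_sub_le hfd hone hexp hφ hε
  intro x hx
  have hbirk : ∀ n : ℕ, 0 < n → |birk f φ n x / n - φ p| ≤
      ε + C * (birk f (fun x => Real.log (fd x)) n x / n) := by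
    intro n hn
    have hn' : (0 : ℝ) < n := by exact_mod_cast hn
    have h1 : |∑ k ∈ Finset.range n, (φ (f^[k] x) - φ p)| ≤
        ∑ k ∈ Finset.range n, (ε + C * Real.log (fd (f^[k] x))) :=
      (Finset.abs_sum_le_sum_abs _ _).trans (Finset.sum_le_sum fun k _ => hbd _)
    rw [Finset.sum_sub_distrib, Finset.sum_add_distrib, ← Finset.mul_sum] at h1
    simp only [Finset.sum_const, Finset.card_range, nsmul_eq_mul] at h1
    have e1 : birk f φ n x / n - φ p = (birk f φ n x - n * φ p) / n := by
      field_simp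
    have e2 : ε + C * (birk f (fun x => Real.log (fd x)) n x / n) =
        (n * ε + C * birk f (fun x => Real.log (fd x)) n x) / n := by
      field_simp
    rw [e1, e2, abs_div, abs_of_pos hn']
    exact div_le_div_of_nonneg_right h1 hn'.le
  have hlim : Tendsto (fun n : ℕ => |birk f φ n x / n - φ p|) atTop (𝓝 |α - φ p|) :=
    (Tendsto.sub_const hx (φ p)).abs
  have hev : ∀ᶠ n : ℕ in atTop,
      ((ε / C : ℝ) : EReal) ≤ ((birk f (fun x => Real.log (fd x)) n x / n : ℝ) : EReal) := by
    filter_upwards [hlim.eventually (lt_mem_nhds hεα), eventually_gt_atTop 0] with n h1 hn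
    rw [EReal.coe_le_coe_iff, div_le_iff₀ hC]
    linarith [hbirk n hn]
  have hpos' : (0 : EReal) < ((ε / C : ℝ) : EReal) := by exact_mod_cast div_pos hε hC
  exact hpos'.trans_le (le_liminf_of_le (by isBoundedDefault) hev)
end Multifractal
end
end

section
/- Fix η, φ ∈ C(X). If the function q ↦ P(η + qφ) is differentiable at q = 0, and ν is an equilibrium state for η, then (d/dq) P(η + qφ) |_{q=0} = ∫ φ dν. -/
/-!
The measure `ν` satisfies `P(η) = h_ν(f) + ∫ η dν`, while the inequality half
`h_ν(f) + ∫ ξ dν ≤ P(ξ)` of the variational principle (`kolSinai_add_integral_le`), applied to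
`ξ = η + qφ`, gives `P(η + qφ) ≥ P(η) + q ∫ φ dν` for all `q`. So the line of slope `∫ φ dν` touches
the graph of `q ↦ P(η + qφ)` from below at `q = 0`, and differentiability forces the slope.

The work lies in that inequality, for the pressure defined by covers with Bowen balls of variable
length. Fix a finite partition `P` and compact sets `K_a ⊆ P_a` whose union `G` has almost full
measure, and put `ψ = ξ - s - 2ε - L·1_{Gᶜ}` with `s` at most slightly above the
pressure and `L` large.

* For small `δ`, a `δ`-ball meets at most one `K_a`, so the one-step sum
  `∑_a sup {exp ψ | B(y, δ) ∩ P_a}` is at most `exp (ξ y - s)` (`sum_sup_le`): only one atom can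
  contribute with full weight, and the others carry the factor `exp (-L)`.
* By definition of the pressure and compactness, finitely many Bowen balls `B(x_i, n_i, δ)` with
  `∑_i exp (S_{n_i} ξ (x_i) - n_i s) ≤ 1` cover `X` (`pressure_cover`).
* Splitting an orbit at time `n_i` shows that the partition sums
  `Z_N = ∑_u sup {exp (S_N ψ) | P_u}` over the atoms of `⋁_{k<N} f^{-k} P` satisfy
  `Z_N ≤ ∑_i exp (S_{n_i} ξ (x_i) - n_i s) Z_{N - n_i}`, hence are bounded in `N`
  (`wsum_bounded`).
* The Gibbs inequality `H_μ(⋁_{k<N} f^{-k} P) + N ∫ ψ dμ ≤ log Z_N` then yields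
  `h_μ(f, P) + ∫ ψ dμ ≤ 0` (`entropy_le_of_wsum_bounded`), and `∫ ψ dμ` is close to `∫ ξ dμ - s`.
-/

open MeasureTheory Filter Set Topology
open scoped ENNReal

noncomputable section

namespace Multifractal

variable {X : Type*} [MetricSpace X]

set_option linter.unusedSectionVars false

/-! ### Partition sums over dynamical refinements -/

/-- The partition sum `∑_u sup {exp (S_N ψ (x)) | x ∈ A ∩ P_u}`, where `u` runs over the words of
length `N` and `P_u` is the corresponding atom of `⋁_{k<N} f^{-k} P`. -/
def wsum (f : X → X) {m : ℕ} (P : Fin m → Set X) (ψ : X → ℝ) (N : ℕ) (A : Set X) : ℝ≥0∞ :=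
  ∑ u : Fin N → Fin m, ⨆ x ∈ A ∩ orbitJoin f P N u, ENNReal.ofReal (Real.exp (birk f ψ N x))

lemma birk_succ (f : X → X) (ψ : X → ℝ) (n : ℕ) (x : X) :
    birk f ψ (n + 1) x = ψ x + birk f ψ n (f x) := by
  simp [birk, Finset.sum_range_succ', add_comm]

lemma wsum_succ_le (f : X → X) {m : ℕ} (P : Fin m → Set X) (ψ : X → ℝ) (N : ℕ) (A : Set X) :
    wsum f P ψ (N + 1) A ≤
      (∑ a, ⨆ x ∈ A ∩ P a, ENNReal.ofReal (Real.exp (ψ x))) * wsum f P ψ N (f '' A) := by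
  unfold wsum
  rw [← (Fin.consEquiv (fun _ => Fin m)).sum_comp, Fintype.sum_prod_type, Finset.sum_mul_sum]
  refine Finset.sum_le_sum fun a _ => Finset.sum_le_sum fun u _ => iSup₂_le fun x hx => ?_
  obtain ⟨hxA, hx⟩ := hx
  simp only [orbitJoin, mem_iInter, Fin.consEquiv_apply] at hx
  have h0 : x ∈ P a := by simpa using hx 0
  have h1 : f x ∈ orbitJoin f P N u := by
    simp only [orbitJoin, mem_iInter]
    intro k
    simpa using hx k.succ
  rw [birk_succ, Real.exp_add, ENNReal.ofReal_mul (Real.exp_pos _).le]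
  exact mul_le_mul' (le_iSup₂_of_le x ⟨hxA, h0⟩ le_rfl)
    (le_iSup₂_of_le (f x) ⟨mem_image_of_mem f hxA, h1⟩ le_rfl)

lemma wsum_mono (f : X → X) {m : ℕ} (P : Fin m → Set X) (ψ : X → ℝ) (N : ℕ) {A B : Set X}
    (h : A ⊆ B) : wsum f P ψ N A ≤ wsum f P ψ N B :=
  Finset.sum_le_sum fun _ _ => biSup_mono fun _ hx => ⟨h hx.1, hx.2⟩

/-- If the one-step partition sum over each `δ`-ball `B(y, δ)` is at most `exp (ζ y)`, then an
initial segment spent in a Bowen ball centred at `y` costs at most the factor `exp (S_n ζ (y))`. -/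
lemma wsum_bowenBall_le (f : X → X) {m : ℕ} (P : Fin m → Set X) (ψ ζ : X → ℝ) (δ : ℝ)
    (hκ : ∀ y, (∑ a, ⨆ x ∈ {x | dist y x < δ} ∩ P a, ENNReal.ofReal (Real.exp (ψ x)))
      ≤ ENNReal.ofReal (Real.exp (ζ y))) (N n : ℕ) (y : X) :
    wsum f P ψ (N + n) (bowenBall f y n δ) ≤
      ENNReal.ofReal (Real.exp (birk f ζ n y)) * wsum f P ψ N univ := by
  induction n generalizing y with
  | zero => simpa [birk] using wsum_mono f P ψ N (subset_univ _)
  | succ n ih =>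
    refine (wsum_succ_le f P ψ (N + n) _).trans ?_
    rw [birk_succ, Real.exp_add, ENNReal.ofReal_mul (Real.exp_pos _).le, mul_assoc]
    refine mul_le_mul' (le_trans ?_ (hκ y)) (le_trans (wsum_mono f P ψ _ ?_) (ih (f y)))
    · refine Finset.sum_le_sum fun a _ => biSup_mono fun x hx => ⟨?_, hx.2⟩
      simpa using hx.1 0 (Nat.succ_pos n)
    · rintro _ ⟨x, hx, rfl⟩ k hk
      have := hx (k + 1) (by omega)
      simpa [Function.iterate_succ_apply] using this

lemma wsum_le_sum (f : X → X) {m : ℕ} (P : Fin m → Set X) (ψ : X → ℝ) (N : ℕ)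
    {ι : Type*} (F : Finset ι) (B : ι → Set X) (hF : univ ⊆ ⋃ i ∈ F, B i) :
    wsum f P ψ N univ ≤ ∑ i ∈ F, wsum f P ψ N (B i) := by
  unfold wsum
  rw [Finset.sum_comm]
  refine Finset.sum_le_sum fun u _ => iSup₂_le fun x hx => ?_
  obtain ⟨i, hi, hxi⟩ := mem_iUnion₂.1 (hF (mem_univ x))
  exact le_trans (le_iSup₂_of_le (f := fun x (_ : x ∈ B i ∩ orbitJoin f P N u) =>
    ENNReal.ofReal (Real.exp (birk f ψ N x))) x ⟨hxi, hx.2⟩ le_rfl)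
    (Finset.single_le_sum (f := fun i => ⨆ x ∈ B i ∩ orbitJoin f P N u,
      ENNReal.ofReal (Real.exp (birk f ψ N x))) (fun _ _ => zero_le) hi)

lemma birk_le (f : X → X) (ψ : X → ℝ) (b : ℝ) (hb : ∀ x, ψ x ≤ b) (N : ℕ) (x : X) :
    birk f ψ N x ≤ N * b := by
  unfold birk
  refine (Finset.sum_le_sum fun k _ => hb _).trans ?_
  simp

lemma wsum_ne_top (f : X → X) {m : ℕ} (P : Fin m → Set X) (ψ : X → ℝ) (b : ℝ)
    (hb : ∀ x, ψ x ≤ b) (N : ℕ) : wsum f P ψ N univ ≠ ⊤ := by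
  refine (ENNReal.sum_lt_top.2 fun u _ => ?_).ne
  refine lt_of_le_of_lt (iSup₂_le fun x _ => ?_)
    (ENNReal.ofReal_lt_top (r := Real.exp (N * b)))
  exact ENNReal.ofReal_le_ofReal (Real.exp_le_exp.2 (birk_le f ψ b hb N x))

/-- A finite cover by Bowen balls whose weights satisfy the Kraft-type inequality `∑ ≤ 1` bounds
the partition sums uniformly in their length, by `wsum N ≤ ∑_i a_i * wsum (N - n_i)`. -/
lemma wsum_bounded (f : X → X) {m : ℕ} (P : Fin m → Set X) (ψ ζ : X → ℝ) (δ b : ℝ)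
    (hb : ∀ x, ψ x ≤ b)
    (hκ : ∀ y, (∑ a, ⨆ x ∈ {x | dist y x < δ} ∩ P a, ENNReal.ofReal (Real.exp (ψ x)))
      ≤ ENNReal.ofReal (Real.exp (ζ y)))
    (F : Finset (X × ℕ)) (hF : univ ⊆ ⋃ p ∈ F, bowenBall f p.1 p.2 δ)
    (hpos : ∀ p ∈ F, 1 ≤ p.2)
    (hsum : ∑ p ∈ F, ENNReal.ofReal (Real.exp (birk f ζ p.2 p.1)) ≤ 1) :
    ∃ C : ℝ≥0∞, C ≠ ⊤ ∧ ∀ N, wsum f P ψ N univ ≤ C := by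
  set M := F.sup Prod.snd with hM
  refine ⟨∑ N ∈ Finset.range M, wsum f P ψ N univ,
    ENNReal.sum_ne_top.2 fun N _ => wsum_ne_top f P ψ b hb N, fun N => ?_⟩
  set C := ∑ N ∈ Finset.range M, wsum f P ψ N univ
  induction N using Nat.strong_induction_on with
  | _ N ih =>
    rcases lt_or_ge N M with h | h
    · exact Finset.single_le_sum (f := fun N => wsum f P ψ N univ) (fun _ _ => zero_le)
        (Finset.mem_range.2 h)
    · refine (wsum_le_sum f P ψ N F _ hF).trans ?_
      calc ∑ p ∈ F, wsum f P ψ N (bowenBall f p.1 p.2 δ)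
          ≤ ∑ p ∈ F, ENNReal.ofReal (Real.exp (birk f ζ p.2 p.1)) * C := by
            refine Finset.sum_le_sum fun p hp => ?_
            have hpM : p.2 ≤ M := Finset.le_sup (f := Prod.snd) hp
            have h1 := hpos p hp
            have := wsum_bowenBall_le f P ψ ζ δ hκ (N - p.2) p.2 p.1
            rw [Nat.sub_add_cancel (hpM.trans h)] at this
            exact this.trans (mul_le_mul' le_rfl (ih _ (by omega)))
        _ ≤ 1 * C := by
            rw [← Finset.sum_mul]
            exact mul_le_mul' hsum le_rfl
        _ = C := one_mul C

/-! ### Finite Bowen covers from the pressure -/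

lemma isOpen_bowenBall (f : X → X) (hf : Continuous f) (y : X) (n : ℕ) (δ : ℝ) :
    IsOpen (bowenBall f y n δ) := by
  have : bowenBall f y n δ = ⋂ k ∈ Finset.range n, {x | dist (f^[k] y) (f^[k] x) < δ} := by
    ext x; simp [bowenBall]
  rw [this]
  exact isOpen_biInter_finset fun k _ =>
    isOpen_lt (continuous_const.dist (hf.iterate k)) continuous_const

/-- A finite cover by Bowen balls of positive order with `∑ exp (S_n ξ - n s) ≤ 1`, extracted by
compactness from the countable covers defining the pressure. -/
lemma pressure_cover [CompactSpace X] (f : X → X) (hf : Continuous f) (ξ : X → ℝ) (p ε δ : ℝ)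
    (hε : 0 < ε) (hδ : 0 < δ) (hp : pressure f univ ξ ≤ (p : EReal)) :
    ∃ s ≤ p + ε, ∃ F : Finset (X × ℕ), (univ ⊆ ⋃ p ∈ F, bowenBall f p.1 p.2 δ) ∧
      (∀ p ∈ F, 1 ≤ p.2) ∧
      ∑ p ∈ F, ENNReal.ofReal (Real.exp (birk f (fun x => ξ x - s) p.2 p.1)) ≤ 1 := by
  have h1 : pressureAt f univ ξ δ < ((p + ε : ℝ) : EReal) := by
    refine lt_of_le_of_lt ((le_iSup₂_of_le δ hδ le_rfl).trans hp) ?_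
    exact_mod_cast lt_add_of_pos_right p hε
  obtain ⟨_, ⟨s, hs, rfl⟩, hlt⟩ := sInf_lt_iff.1 h1
  refine ⟨s, (EReal.coe_lt_coe_iff.1 hlt).le, ?_⟩
  have hs1 : (⨅ (E : Set (X × ℕ)) (_ : IsBowenCover f univ 1 δ E),
      coverSum E fun p => -(p.2 : ℝ) * s + birk f ξ p.2 p.1) < 1 := by
    refine lt_of_le_of_lt ?_ zero_lt_one
    rw [← (hs : mP f univ s ξ δ = 0)]
    exact le_iSup (fun N => ⨅ (E : Set (X × ℕ)) (_ : IsBowenCover f univ N δ E),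
      coverSum E fun p => -(p.2 : ℝ) * s + birk f ξ p.2 p.1) 1
  simp only [iInf_lt_iff] at hs1
  obtain ⟨E, ⟨-, hE1, hE2⟩, hE⟩ := hs1
  obtain ⟨F, hFE, hFfin, hF⟩ := isCompact_univ.elim_finite_subcover_image
    (fun p (_ : p ∈ E) => isOpen_bowenBall f hf p.1 p.2 δ) hE2
  refine ⟨hFfin.toFinset, by simpa using hF, fun p hp => (hE1 p (hFE (by simpa using hp))).2, ?_⟩
  refine le_trans ?_ hE.le
  have hb : ∀ p : X × ℕ, birk f (fun x => ξ x - s) p.2 p.1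
      = -(p.2 : ℝ) * s + birk f ξ p.2 p.1 := by
    intro p; simp [birk, Finset.sum_sub_distrib]; ring
  simp only [hb]
  unfold coverSum
  rw [tsum_subtype E fun p => ENNReal.ofReal (Real.exp (-(p.2 : ℝ) * s + birk f ξ p.2 p.1))]
  refine le_trans (Finset.sum_le_sum fun p hp => ?_) (ENNReal.sum_le_tsum hFfin.toFinset)
  rw [indicator_of_mem (hFE (by simpa using hp))]

/-! ### Entropy and the variational inequality -/

section Entropy

variable [MeasurableSpace X]

lemma measurableSet_orbitJoin (f : X → X) (hf : Measurable f) {m : ℕ} (P : Fin m → Set X)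
    (hP : IsFinPartition P) (N : ℕ) (u : Fin N → Fin m) : MeasurableSet (orbitJoin f P N u) :=
  MeasurableSet.iInter fun k => (hf.iterate k) (hP.1 _)

lemma orbitJoin_disjoint (f : X → X) {m : ℕ} (P : Fin m → Set X)
    (hP : IsFinPartition P) (N : ℕ) : Pairwise (Function.onFun Disjoint (orbitJoin f P N)) := by
  intro u v huv
  obtain ⟨k, hk⟩ := Function.ne_iff.1 huv
  refine disjoint_left.2 fun x hx hy => ?_
  simp only [orbitJoin, mem_iInter] at hx hy
  exact disjoint_left.1 (hP.2.1 _ _ hk) (hx k) (hy k)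

lemma orbitJoin_iUnion (f : X → X) {m : ℕ} (P : Fin m → Set X)
    (hP : IsFinPartition P) (N : ℕ) : (⋃ u, orbitJoin f P N u) = univ := by
  refine eq_univ_of_forall fun x => ?_
  have : ∀ k : Fin N, ∃ a, f^[k] x ∈ P a := fun k => mem_iUnion.1 (hP.2.2 ▸ mem_univ _)
  choose u hu using this
  exact mem_iUnion.2 ⟨u, mem_iInter.2 hu⟩

lemma partEnt_nonneg (μ : Measure X) [IsProbabilityMeasure μ] {ι : Type*} [Fintype ι]
    (P : ι → Set X) : 0 ≤ partEnt μ P := by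
  refine Finset.sum_nonneg fun i _ => ?_
  have h : (μ (P i)).toReal ≤ 1 := by
    simpa using ENNReal.toReal_mono ENNReal.one_ne_top (prob_le_one (μ := μ) (s := P i))
  have := mul_nonpos_of_nonneg_of_nonpos (ENNReal.toReal_nonneg (a := μ (P i)))
    (Real.log_nonpos ENNReal.toReal_nonneg h)
  linarith

/-- The Gibbs inequality `H_μ(Q) + ∫ h dμ ≤ log ∑_i sup_{Q_i} exp h`, with `C` an upper bound for
the sum. -/
lemma gibbs_ineq (μ : Measure X) [IsProbabilityMeasure μ] {ι : Type*} [Fintype ι]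
    (Q : ι → Set X) (hm : ∀ i, MeasurableSet (Q i)) (hd : Pairwise (Function.onFun Disjoint Q))
    (hU : (⋃ i, Q i) = univ) (h : X → ℝ) (hint : Integrable h μ) (C : ℝ) (hC : 0 < C)
    (hsum : ∑ i, ⨆ x ∈ Q i, ENNReal.ofReal (Real.exp (h x)) ≤ ENNReal.ofReal C) :
    partEnt μ Q + ∫ x, h x ∂μ ≤ Real.log C := by
  set q : ι → ℝ≥0∞ := fun i => ⨆ x ∈ Q i, ENNReal.ofReal (Real.exp (h x)) with hq
  have hqtop : ∀ i, q i ≠ ⊤ := fun i => ne_top_of_le_ne_top ENNReal.ofReal_ne_top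
    ((Finset.single_le_sum (f := q) (fun _ _ => zero_le) (Finset.mem_univ i)).trans hsum)
  have hle : ∀ i, ∀ x ∈ Q i, Real.exp (h x) ≤ (q i).toReal := fun i x hx => by
    rw [← ENNReal.toReal_ofReal (Real.exp_pos (h x)).le]
    exact ENNReal.toReal_mono (hqtop i)
      (le_iSup₂_of_le (f := fun x (_ : x ∈ Q i) => ENNReal.ofReal (Real.exp (h x))) x hx le_rfl)
  have hsumR : ∑ i, (q i).toReal ≤ C := by
    rw [← ENNReal.toReal_sum fun i _ => hqtop i, ← ENNReal.toReal_ofReal hC.le]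
    exact ENNReal.toReal_mono ENNReal.ofReal_ne_top hsum
  have hI : ∫ x, h x ∂μ = ∑ i, ∫ x in Q i, h x ∂μ := by
    rw [← integral_iUnion_fintype hm hd fun i => hint.integrableOn, hU, setIntegral_univ]
  have hp1 : ∑ i, (μ (Q i)).toReal = 1 := by
    rw [← ENNReal.toReal_sum fun i _ => measure_ne_top _ _, ← tsum_fintype (L := .unconditional _),
      ← measure_iUnion hd hm, hU, measure_univ, ENNReal.toReal_one]
  have hterm : ∀ i, -((μ (Q i)).toReal * Real.log (μ (Q i)).toReal) + ∫ x in Q i, h x ∂μ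
      ≤ (q i).toReal / C - (μ (Q i)).toReal + (μ (Q i)).toReal * Real.log C := by
    intro i
    rcases eq_or_ne (μ (Q i)) 0 with h0 | h0
    · simp [Measure.restrict_eq_zero.2 h0, h0]; positivity
    have hppos : 0 < (μ (Q i)).toReal := ENNReal.toReal_pos h0 (measure_ne_top _ _)
    set r := (μ (Q i)).toReal
    obtain ⟨x, hx⟩ := nonempty_of_measure_ne_zero h0
    have hqpos : 0 < (q i).toReal := (Real.exp_pos _).trans_le (hle i x hx)
    have h1 : ∫ x in Q i, h x ∂μ ≤ r * Real.log (q i).toReal := by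
      calc ∫ x in Q i, h x ∂μ ≤ ∫ x in Q i, Real.log (q i).toReal ∂μ := by
            refine setIntegral_mono_on hint.integrableOn (by simp) (hm i) fun x hx => ?_
            exact (Real.le_log_iff_exp_le hqpos).2 (hle i x hx)
        _ = r * Real.log (q i).toReal := by simp [r, Measure.real]
    have h2 := Real.log_le_sub_one_of_pos (x := (q i).toReal / (r * C)) (by positivity)
    rw [Real.log_div hqpos.ne' (by positivity), Real.log_mul hppos.ne' hC.ne'] at h2
    have h3 := mul_le_mul_of_nonneg_left h2 hppos.le
    have h4 : r * ((q i).toReal / (r * C) - 1) = (q i).toReal / C - r := by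
      field_simp
    linarith
  calc partEnt μ Q + ∫ x, h x ∂μ
      = ∑ i, (-((μ (Q i)).toReal * Real.log (μ (Q i)).toReal) + ∫ x in Q i, h x ∂μ) := by
        rw [hI, partEnt, Finset.sum_add_distrib]
    _ ≤ ∑ i, ((q i).toReal / C - (μ (Q i)).toReal + (μ (Q i)).toReal * Real.log C) :=
        Finset.sum_le_sum fun i _ => hterm i
    _ = (∑ i, (q i).toReal) / C - 1 + Real.log C := by
        rw [Finset.sum_add_distrib, Finset.sum_sub_distrib, hp1, ← Finset.sum_mul, hp1,
          Finset.sum_div, one_mul]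
    _ ≤ Real.log C := by
        have := (div_le_one hC).2 hsumR
        linarith

lemma integrable_comp_iterate (f : X → X) (μ : Measure X) (hinv : MeasurePreserving f μ μ)
    (ψ : X → ℝ) (hψ : Integrable ψ μ) (k : ℕ) : Integrable (fun x => ψ (f^[k] x)) μ :=
  (hinv.iterate k).integrable_comp_of_integrable hψ

lemma integral_birk (f : X → X) (μ : Measure X) (hinv : MeasurePreserving f μ μ)
    (ψ : X → ℝ) (hψ : Integrable ψ μ) (N : ℕ) :
    ∫ x, birk f ψ N x ∂μ = N * ∫ x, ψ x ∂μ := by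
  unfold birk
  rw [integral_finsetSum _ fun k _ => integrable_comp_iterate f μ hinv ψ hψ k]
  have : ∀ k, ∫ x, ψ (f^[k] x) ∂μ = ∫ x, ψ x ∂μ := fun k => by
    have hk := hinv.iterate k
    conv_rhs => rw [← hk.map_eq]
    rw [integral_map hk.measurable.aemeasurable]
    rw [hk.map_eq]; exact hψ.aestronglyMeasurable
  simp [this]

/-- Uniformly bounded partition sums for `ψ` force `h_μ(f, P) + ∫ ψ dμ ≤ 0`. -/
lemma entropy_le_of_wsum_bounded (f : X → X) (μ : Measure X) [IsProbabilityMeasure μ]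
    (hinv : MeasurePreserving f μ μ) {m : ℕ} (P : Fin m → Set X) (hP : IsFinPartition P)
    (ψ : X → ℝ) (hψ : Integrable ψ μ) (C : ℝ≥0∞) (hC : C ≠ ⊤)
    (hbd : ∀ N, wsum f P ψ N univ ≤ C) :
    (⨅ n : ℕ, partEnt μ (orbitJoin f P (n + 1)) / (n + 1)) ≤ -∫ x, ψ x ∂μ := by
  set D := C.toReal + 1
  have hD : 0 < D := by positivity
  have hCD : C ≤ ENNReal.ofReal D := by
    rw [← ENNReal.ofReal_toReal hC]; exact ENNReal.ofReal_le_ofReal (by simp [D])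
  have hn : ∀ n : ℕ, (⨅ n : ℕ, partEnt μ (orbitJoin f P (n + 1)) / (n + 1))
      ≤ Real.log D / ((n : ℝ) + 1) + -∫ x, ψ x ∂μ := by
    intro n
    refine (ciInf_le ⟨0, ?_⟩ n).trans ?_
    · rintro _ ⟨n, rfl⟩
      exact div_nonneg (partEnt_nonneg _ _) (by positivity)
    have h := gibbs_ineq μ (orbitJoin f P (n + 1))
      (measurableSet_orbitJoin f hinv.measurable P hP _) (orbitJoin_disjoint f P hP _)
      (orbitJoin_iUnion f P hP _) (birk f ψ (n + 1))
      (integrable_finsetSum _ fun k _ => integrable_comp_iterate f μ hinv ψ hψ k) D hD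
      (by simpa [wsum] using (hbd (n + 1)).trans hCD)
    rw [integral_birk f μ hinv ψ hψ] at h
    have hn : (0 : ℝ) < n + 1 := by positivity
    push_cast at h
    rw [div_le_iff₀ hn, add_mul, div_mul_cancel₀ _ hn.ne']
    linarith
  have hlim : Tendsto (fun n : ℕ => Real.log D / ((n : ℝ) + 1) + -∫ x, ψ x ∂μ) atTop
      (𝓝 (0 + -∫ x, ψ x ∂μ)) := by
    refine Tendsto.add_const _ ?_
    have := (tendsto_one_div_add_atTop_nhds_zero_nat (𝕜 := ℝ)).const_mul (Real.log D)
    simpa [div_eq_mul_inv] using this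
  rw [zero_add] at hlim
  exact ge_of_tendsto' hlim hn

/-- If `B` meets at most one of the sets `K a`, then at most one atom of `P` can contribute the full
weight `t` to the one-step partition sum over `B`; every atom contributes at most `t * τ` through
its points outside `⋃ a, K a`. -/
lemma sum_sup_le {m : ℕ} (P K : Fin m → Set X) (hKP : ∀ a, K a ⊆ P a)
    (hP : ∀ i j, i ≠ j → Disjoint (P i) (P j))
    (B : Set X) (hB : ∀ a b, a ≠ b → (B ∩ K a).Nonempty → (B ∩ K b).Nonempty → False)
    (ψ : X → ℝ) (t τ : ℝ) (ht : 0 ≤ t) (hτ : 0 ≤ τ)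
    (h1 : ∀ x ∈ B, Real.exp (ψ x) ≤ t)
    (h2 : ∀ x ∈ B, x ∉ ⋃ a, K a → Real.exp (ψ x) ≤ t * τ) :
    (∑ a, ⨆ x ∈ B ∩ P a, ENNReal.ofReal (Real.exp (ψ x)))
      ≤ ENNReal.ofReal (t * (1 + m * τ)) := by
  classical
  have key : ∀ a, (⨆ x ∈ B ∩ P a, ENNReal.ofReal (Real.exp (ψ x))) ≤
      ENNReal.ofReal (if (B ∩ K a).Nonempty then t else 0) + ENNReal.ofReal (t * τ) := by
    intro a
    refine iSup₂_le fun x hx => ?_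
    by_cases hxK : x ∈ K a
    · rw [if_pos ⟨x, hx.1, hxK⟩]
      exact (ENNReal.ofReal_le_ofReal (h1 x hx.1)).trans le_self_add
    · refine (ENNReal.ofReal_le_ofReal (h2 x hx.1 fun hU => ?_)).trans le_add_self
      obtain ⟨b, hb⟩ := mem_iUnion.1 hU
      rcases eq_or_ne b a with rfl | hne
      · exact hxK hb
      · exact disjoint_left.1 (hP b a hne) (hKP b hb) hx.2
  refine (Finset.sum_le_sum fun a _ => key a).trans ?_
  have h3 : ∑ a, ENNReal.ofReal (if (B ∩ K a).Nonempty then t else 0) ≤ ENNReal.ofReal t := by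
    by_cases hex : ∃ a, (B ∩ K a).Nonempty
    · obtain ⟨a, ha⟩ := hex
      rw [Finset.sum_eq_single a]
      · rw [if_pos ha]
      · intro b _ hb
        rw [if_neg fun h => hB b a hb h ha, ENNReal.ofReal_zero]
      · simp
    · push Not at hex
      simp [hex]
  rw [Finset.sum_add_distrib, mul_add, mul_one, ENNReal.ofReal_add ht (by positivity)]
  refine add_le_add h3 (le_of_eq ?_)
  rw [Finset.sum_const, Finset.card_univ, Fintype.card_fin, nsmul_eq_mul,
    ← ENNReal.ofReal_natCast, ← ENNReal.ofReal_mul (by positivity)]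
  congr 1; ring

/-- One half of the variational principle, for a single finite partition. -/
lemma partition_entropy_add_integral_le [CompactSpace X] [BorelSpace X]
    (f : X → X) (hf : Continuous f) (ξ : X → ℝ) (hξ : Continuous ξ) (p : ℝ)
    (hp : pressure f univ ξ ≤ (p : EReal))
    (μ : Measure X) [IsProbabilityMeasure μ] (hinv : MeasurePreserving f μ μ)
    {m : ℕ} (P : Fin m → Set X) (hP : IsFinPartition P) :
    (⨅ n : ℕ, partEnt μ (orbitJoin f P (n + 1)) / (n + 1)) + ∫ x, ξ x ∂μ ≤ p := by
  refine le_of_forall_pos_le_add fun ε' hε' => ?_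
  set ε := ε' / 4 with hεdef
  have hε : 0 < ε := by positivity
  set τ := min 1 (ε / (m + 1)) with hτdef
  have hτ : 0 < τ := by positivity
  have hτ1 : τ ≤ 1 := min_le_left _ _
  have hmτ : 1 + m * τ ≤ Real.exp ε := by
    have h1 : τ * (m + 1) ≤ ε := (le_div_iff₀ (by positivity)).1 (min_le_right _ _)
    have h2 := Real.add_one_le_exp ε
    nlinarith
  set L := -Real.log τ with hL
  have hL0 : 0 ≤ L := by have := Real.log_nonpos hτ.le hτ1; linarith
  -- Compact pieces filling the atoms up to a total defect of at most `ε / (L + 1)`.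
  set κ := ε / ((L + 1) * (m + 1)) with hκdef
  have hκ : 0 < κ := by positivity
  have hK : ∀ a, ∃ K ⊆ P a, IsCompact K ∧ μ (P a \ K) < ENNReal.ofReal κ := fun a =>
    (hP.1 a).exists_isCompact_sdiff_lt (measure_ne_top _ _) (by simpa using hκ)
  choose K hKP hKc hKμ using hK
  set G := ⋃ a, K a with hG
  have hGm : MeasurableSet G := MeasurableSet.iUnion fun a => (hKc a).measurableSet
  have hGμ : μ.real Gᶜ ≤ m * κ := by
    have hsub : Gᶜ ⊆ ⋃ a, (P a \ K a) := by
      intro x hx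
      obtain ⟨a, ha⟩ := mem_iUnion.1 (hP.2.2 ▸ mem_univ x)
      exact mem_iUnion.2 ⟨a, ha, fun h => hx (mem_iUnion.2 ⟨a, h⟩)⟩
    refine (measureReal_mono hsub).trans ((measureReal_iUnion_fintype_le _).trans ?_)
    refine (Finset.sum_le_sum fun a _ => ENNReal.toReal_le_of_le_ofReal hκ.le (hKμ a).le).trans ?_
    simp
  have hbad : L * μ.real Gᶜ ≤ ε := by
    have h1 : κ * ((L + 1) * (m + 1)) = ε := div_mul_cancel₀ _ (by positivity)
    have h2 := mul_le_mul_of_nonneg_left hGμ hL0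
    have h3 : 0 ≤ κ * (m : ℝ) := by positivity
    have h4 : 0 ≤ κ * L := by positivity
    nlinarith
  -- A scale `δ` separating the compact pieces and adapted to the continuity of `ξ`.
  have hδ : ∃ δ > 0, (∀ x y, dist x y < δ → dist (ξ x) (ξ y) < ε) ∧
      ∀ a b, a ≠ b → Disjoint (Metric.thickening δ (K a)) (Metric.thickening δ (K b)) := by
    obtain ⟨δ₁, hδ₁, huc⟩ := Metric.uniformContinuous_iff.1
      (CompactSpace.uniformContinuous_of_continuous hξ) ε hε
    have hev : ∀ᶠ δ in 𝓝[>] (0 : ℝ), ∀ a b, a ≠ b →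
        Disjoint (Metric.thickening δ (K a)) (Metric.thickening δ (K b)) := by
      refine eventually_all.2 fun a => eventually_all.2 fun b => ?_
      by_cases hab : a = b
      · simp [hab]
      obtain ⟨δ₂, hδ₂, hdis⟩ := ((hP.2.1 a b hab).mono (hKP a) (hKP b)).exists_thickenings
        (hKc a) (hKc b).isClosed
      filter_upwards [Ioc_mem_nhdsGT hδ₂] with δ hδ _
      exact hdis.mono (Metric.thickening_mono hδ.2 _) (Metric.thickening_mono hδ.2 _)
    obtain ⟨δ, h1, h2⟩ := (hev.and (Ioc_mem_nhdsGT hδ₁)).exists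
    exact ⟨δ, h2.1, fun x y h => huc (h.trans_le h2.2), h1⟩
  obtain ⟨δ, hδ, huc, hsep⟩ := hδ
  obtain ⟨s, hs, F, hF, hF1, hFsum⟩ := pressure_cover f hf ξ p ε δ hε hδ hp
  set ψ : X → ℝ := fun x => ξ x - (s + 2 * ε) - Gᶜ.indicator (fun _ => L) x with hψ
  have hξint : Integrable ξ μ :=
    hξ.integrable_of_hasCompactSupport (HasCompactSupport.of_compactSpace ξ)
  have hindint : Integrable (Gᶜ.indicator fun _ => L) μ :=
    (integrable_const L).indicator hGm.compl
  have hψint : Integrable ψ μ := (hξint.sub (integrable_const _)).sub hindint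
  have hind : ∀ x, 0 ≤ Gᶜ.indicator (fun _ => L) x := fun x =>
    indicator_nonneg (fun _ _ => hL0) x
  have hb : ∃ b, ∀ x, ψ x ≤ b := by
    obtain ⟨b, hb⟩ := (isCompact_range hξ).bddAbove
    refine ⟨b - (s + 2 * ε), fun x => ?_⟩
    have h1 := hb (mem_range_self x)
    have h2 := hind x
    simp only [hψ]; linarith
  obtain ⟨b, hb⟩ := hb
  have hone : ∀ y, (∑ a, ⨆ x ∈ {x | dist y x < δ} ∩ P a, ENNReal.ofReal (Real.exp (ψ x)))
      ≤ ENNReal.ofReal (Real.exp (ξ y - s)) := by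
    intro y
    have hclose : ∀ x, dist y x < δ → ξ x ≤ ξ y + ε := fun x hx => by
      have := huc y x hx
      rw [Real.dist_eq] at this
      linarith [(abs_lt.1 this).1]
    refine (sum_sup_le P K hKP hP.2.1 {x | dist y x < δ} ?_ ψ (Real.exp (ξ y - s - ε)) τ
      (Real.exp_pos _).le hτ.le ?_ ?_).trans (ENNReal.ofReal_le_ofReal ?_)
    · rintro a b hab ⟨x, hx, hxa⟩ ⟨z, hz, hzb⟩
      exact disjoint_left.1 (hsep a b hab) (Metric.mem_thickening_iff.2 ⟨x, hxa, hx⟩)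
        (Metric.mem_thickening_iff.2 ⟨z, hzb, hz⟩)
    · intro x hx
      refine Real.exp_le_exp.2 ?_
      have h1 := hclose x hx
      have h2 := hind x
      simp only [hψ]; linarith
    · intro x hx hxG
      rw [← Real.exp_log hτ, ← Real.exp_add]
      refine Real.exp_le_exp.2 ?_
      have h1 := hclose x hx
      have h2 : Gᶜ.indicator (fun _ => L) x = L := indicator_of_mem (s := Gᶜ) hxG _
      simp only [hψ, h2]; linarith
    · calc Real.exp (ξ y - s - ε) * (1 + m * τ) ≤ Real.exp (ξ y - s - ε) * Real.exp ε :=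
            mul_le_mul_of_nonneg_left hmτ (Real.exp_pos _).le
        _ = Real.exp (ξ y - s) := by rw [← Real.exp_add]; congr 1; ring
  obtain ⟨C, hC, hbd⟩ := wsum_bounded f P ψ (fun x => ξ x - s) δ b hb hone F hF hF1 hFsum
  have hfin := entropy_le_of_wsum_bounded f μ hinv P hP ψ hψint C hC hbd
  have hint : ∫ x, ψ x ∂μ = ∫ x, ξ x ∂μ - (s + 2 * ε) - L * μ.real Gᶜ := by
    have e1 : ∫ x, ψ x ∂μ = ∫ x, (ξ x - (s + 2 * ε)) ∂μ
        - ∫ x, Gᶜ.indicator (fun _ => L) x ∂μ :=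
      integral_sub (hξint.sub (integrable_const _)) hindint
    rw [e1, integral_sub hξint (integrable_const _), integral_const,
      integral_indicator_const L hGm.compl]
    simp [mul_comm]
  rw [hint] at hfin
  linarith

/-- One half of the variational principle: `h_μ(f) + ∫ ξ dμ ≤ P(ξ)`. -/
lemma kolSinai_add_integral_le [CompactSpace X] [BorelSpace X]
    (f : X → X) (hf : Continuous f) (ξ : X → ℝ) (hξ : Continuous ξ) (p : ℝ)
    (hp : pressure f univ ξ ≤ (p : EReal))
    (μ : Measure X) [IsProbabilityMeasure μ] (hinv : MeasurePreserving f μ μ) :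
    kolSinai f μ + ∫ x, ξ x ∂μ ≤ p := by
  -- The trivial partition gives `0 ≤ p - ∫ ξ dμ`, which bounds the suprema over empty families
  -- (equal to `0` by convention) in the definition of `kolSinai`.
  have hnn : 0 ≤ p - ∫ x, ξ x ∂μ := by
    have hT : IsFinPartition (fun _ : Fin 1 => (univ : Set X)) :=
      ⟨fun _ => MeasurableSet.univ, fun i j h => (h (Subsingleton.elim i j)).elim,
        iUnion_const _⟩
    have h1 := partition_entropy_add_integral_le f hf ξ hξ p hp μ hinv _ hT
    have h2 : 0 ≤ ⨅ n : ℕ,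
        partEnt μ (orbitJoin f (fun _ : Fin 1 => (univ : Set X)) (n + 1)) / (n + 1) :=
      le_ciInf fun n => div_nonneg (partEnt_nonneg _ _) (by positivity)
    linarith
  have : kolSinai f μ ≤ p - ∫ x, ξ x ∂μ :=
    Real.iSup_le (fun m => Real.iSup_le (fun P => Real.iSup_le (fun hP => by
      have := partition_entropy_add_integral_le f hf ξ hξ p hp μ hinv P hP
      linarith) hnn) hnn) hnn
  linarith

end Entropy

/-- Ruelle's formula for the derivative of pressure.
If `q ↦ P(η + qφ)` is differentiable at `q = 0` and `ν` is an equilibrium state for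
`η`, then `(d/dq) P(η + qφ)|_{q=0} = ∫ φ dν`. -/
theorem ruelle_derivative {X : Type*} [MetricSpace X] [CompactSpace X]
    [MeasurableSpace X] [BorelSpace X]
    (f : X → X) (hf : Continuous f) (hfin : FiniteHtop f)
    (η φ : X → ℝ) (hη : Continuous η) (hφ : Continuous φ)
    (g : ℝ → ℝ)
    (hg : ∀ q : ℝ, ((g q : ℝ) : EReal) = pressure f univ (fun x => η x + q * φ x))
    (hdiff : DifferentiableAt ℝ g 0)
    (ν : Measure X) [IsProbabilityMeasure ν] (hinv : MeasurePreserving f ν ν)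
    (heq : pressure f univ η = ((kolSinai f ν + ∫ x, η x ∂ν : ℝ) : EReal)) :
    deriv g 0 = ∫ x, φ x ∂ν := by
  have key : ∀ q : ℝ, g 0 + q * ∫ x, φ x ∂ν ≤ g q := by
    intro q
    have hint : ∀ ζ : X → ℝ, Continuous ζ → Integrable ζ ν := fun ζ hζ =>
      hζ.integrable_of_hasCompactSupport (HasCompactSupport.of_compactSpace ζ)
    have h0 : g 0 = kolSinai f ν + ∫ x, η x ∂ν := by
      have h := hg 0
      simp only [zero_mul, add_zero] at h
      exact_mod_cast h.trans heq
    have h1 := kolSinai_add_integral_le f hf (fun x => η x + q * φ x)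
      (hη.add (continuous_const.mul hφ)) (g q) (hg q).ge ν hinv
    rw [integral_add (hint η hη) ((hint φ hφ).const_mul q), integral_const_mul] at h1
    linarith
  -- The line of slope `∫ φ dν` supports the graph of `g` at `0`.
  have hmin : IsLocalMin (fun q => g q - q * ∫ x, φ x ∂ν) 0 :=
    Eventually.of_forall fun q => by
      have := key q
      simp only [zero_mul, sub_zero]
      linarith
  have hder := hdiff.hasDerivAt.sub ((hasDerivAt_id (0 : ℝ)).mul_const (∫ x, φ x ∂ν))
  have := hmin.hasDerivAt_eq_zero hder
  linarith
end Multifractal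
end
end
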